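/- Let p be a prime with p ≡ 3 (mod 8). Then the sum of the quadratic residues of p lying in [1, (p−1)/2] is strictly greater than the sum of the non-residues of p lying in [1, (p−1)/2], i.e. ΣR_b > ΣN_b. -/

import Mathlib

open Filter Topology

theorem rpow_diff_bound {x y c s : ℝ} (n : ℕ) (hc : 0 < c) (hc1 : c ≤ 1) (hs1 : 1 ≤ s) (hs2 : s ≤ 2)
    (hx : c * (n + 1) ≤ x) (hxy : x ≤ y) (hyx : y ≤ x + 1) :
    |x ^ (-s) - y ^ (-s)| ≤ 2 * (c⁻¹) ^ 3 * (1 / ((n : ℝ) + 1) ^ 2) := by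
  have hn : (0 : ℝ) < n + 1 := by positivity
  have hx0 : 0 < x := lt_of_lt_of_le (by positivity) hx
  have hy0 : 0 < y := lt_of_lt_of_le hx0 hxy
  have h1 : 1 + s * (x / y - 1) ≤ (x / y) ^ s := by
    have := one_add_mul_self_le_rpow_one_add (s := x / y - 1) (by
      have : 0 < x / y := by positivity
      linarith) hs1
    simpa [Function.comp_def] using this
  have h2 : y ^ (-s) = x ^ (-s) * (x / y) ^ s := by
    rw [Real.div_rpow hx0.le hy0.le, Real.rpow_neg hx0.le, Real.rpow_neg hy0.le]
    have := (Real.rpow_pos_of_pos hx0 s).ne'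
    field_simp
  have hle : y ^ (-s) ≤ x ^ (-s) := Real.rpow_le_rpow_of_nonpos hx0 hxy (by linarith)
  have h3 : 1 - x / y ≤ c⁻¹ * (1 / ((n : ℝ) + 1)) := by
    have e : 1 - x / y = (y - x) / y := by field_simp
    rw [e, ← one_div, one_div_mul_one_div]
    have : c * (n + 1) ≤ y := hx.trans hxy
    gcongr
    linarith
  have h4 : x ^ (-s) ≤ (c⁻¹) ^ 2 * (1 / ((n : ℝ) + 1)) := by
    calc x ^ (-s) ≤ (c * (n + 1)) ^ (-s) :=
          Real.rpow_le_rpow_of_nonpos (by positivity) hx (by linarith)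
      _ = (c⁻¹) ^ s * (((n : ℝ) + 1) ^ (-s)) := by
          rw [Real.mul_rpow hc.le hn.le, Real.inv_rpow hc.le, Real.rpow_neg hc.le]
      _ ≤ (c⁻¹) ^ (2 : ℝ) * (((n : ℝ) + 1) ^ (-1 : ℝ)) := by
          have a1 : 1 ≤ c⁻¹ := (one_le_inv₀ hc).mpr hc1
          have a2 : (1 : ℝ) ≤ n + 1 := by linarith [Nat.cast_nonneg (α := ℝ) n]
          gcongr
      _ = _ := by rw [Real.rpow_neg_one, one_div]; norm_cast
  rw [abs_of_nonneg (by linarith), h2]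
  calc x ^ (-s) - x ^ (-s) * (x / y) ^ s = x ^ (-s) * (1 - (x / y) ^ s) := by ring
    _ ≤ x ^ (-s) * (2 * (1 - x / y)) := by
        have hq : x / y ≤ 1 := (div_le_one hy0).mpr hxy
        have : 0 < x ^ (-s) := by positivity
        apply mul_le_mul_of_nonneg_left _ this.le
        nlinarith
    _ ≤ ((c⁻¹) ^ 2 * (1 / ((n : ℝ) + 1))) * (2 * (c⁻¹ * (1 / ((n : ℝ) + 1)))) := by
        have hq : x / y ≤ 1 := (div_le_one hy0).mpr hxy
        have : 0 ≤ 2 * (1 - x / y) := by linarith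
        gcongr
    _ = _ := by field_simp

theorem rpow_diff_bound' {a s : ℝ} (n : ℕ) (ha : 0 < a) (ha1 : a < 1) (hs1 : 1 ≤ s) (hs2 : s ≤ 2) :
    |((n : ℝ) + a) ^ (-s) - ((n : ℝ) + 1 - a) ^ (-s)| ≤
      2 * ((min a (1 - a))⁻¹) ^ 3 * (1 / ((n : ℝ) + 1) ^ 2) := by
  have hn := Nat.cast_nonneg (α := ℝ) n
  rcases le_total a (1 - a) with h | h
  · rw [min_eq_left h]
    exact rpow_diff_bound n ha ha1.le hs1 hs2 (by nlinarith) (by linarith) (by linarith)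
  · rw [min_eq_right h, abs_sub_comm]
    exact rpow_diff_bound n (by linarith) (by linarith) hs1 hs2 (by nlinarith) (by linarith) (by linarith)

theorem hurwitzOdd_one_eq_cot {a : ℝ} (ha : 0 < a) (ha1 : a < 1) :
    HurwitzZeta.hurwitzZetaOdd (a : UnitAddCircle) 1 = (Real.pi / 2 * Real.cot (Real.pi * a) : ℝ) := by
  have hsum : Summable (fun n : ℕ => 2 * ((min a (1 - a))⁻¹) ^ 3 * (1 / ((n : ℝ) + 1) ^ 2)) := by
    apply Summable.mul_left
    have := (summable_nat_add_iff (f := fun n : ℕ => 1 / (n : ℝ) ^ 2) 1).mpr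
      (Real.summable_one_div_nat_pow.mpr (by norm_num))
    simpa [Function.comp_def] using this
  let F : ℝ → ℕ → ℝ := fun s n => ((n : ℝ) + a) ^ (-s) - ((n : ℝ) + 1 - a) ^ (-s)
  have hpos1 : ∀ n : ℕ, 0 < (n : ℝ) + a := fun n => by positivity
  have hpos2 : ∀ n : ℕ, 0 < (n : ℝ) + 1 - a := fun n => by
    have := Nat.cast_nonneg (α := ℝ) n
    linarith
  have hlim : Tendsto (fun s => ∑' n, F s n) (𝓝[>] (1 : ℝ)) (𝓝 (∑' n, F 1 n)) := by
    apply tendsto_tsum_of_dominated_convergence hsum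
    · intro n
      apply Tendsto.mono_left _ nhdsWithin_le_nhds
      have : Continuous (fun s => F s n) := by
        have h1 := (hpos1 n).ne'
        have h2 := (hpos2 n).ne'
        apply Continuous.sub
        · exact Continuous.rpow continuous_const (by fun_prop) (fun _ => Or.inl h1)
        · exact Continuous.rpow continuous_const (by fun_prop) (fun _ => Or.inl h2)
      exact this.tendsto 1
    · filter_upwards [Ioc_mem_nhdsGT (show (1 : ℝ) < 2 by norm_num)] with s hs n
      exact rpow_diff_bound' n ha ha1 hs.1.le hs.2
  have hval : ∀ s : ℝ, 1 < s → HurwitzZeta.hurwitzZetaOdd (a : UnitAddCircle) s =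
      ((∑' n, F s n) / 2 : ℝ) := by
    intro s hs
    rw [← (HurwitzZeta.hasSum_nat_hurwitzZetaOdd_of_mem_Icc (a := a) ⟨ha.le, ha1.le⟩
      (s := s) (by simpa using hs)).tsum_eq, ← tsum_div_const, Complex.ofReal_tsum]
    congr 1
    ext n
    simp only [F]
    push_cast
    rw [Complex.ofReal_cpow (hpos1 n).le, Complex.ofReal_cpow (hpos2 n).le]
    push_cast
    rw [Complex.cpow_neg, Complex.cpow_neg, one_div, one_div]
  have hcont : Tendsto (fun s : ℝ => HurwitzZeta.hurwitzZetaOdd (a : UnitAddCircle) s) (𝓝[>] (1 : ℝ))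
      (𝓝 (HurwitzZeta.hurwitzZetaOdd (a : UnitAddCircle) 1)) := by
    apply Tendsto.mono_left _ nhdsWithin_le_nhds
    have := ((HurwitzZeta.differentiable_hurwitzZetaOdd (a : UnitAddCircle)).continuous.comp
      Complex.continuous_ofReal).tendsto 1
    simpa [Function.comp_def] using this
  have hlim2 : Tendsto (fun s : ℝ => HurwitzZeta.hurwitzZetaOdd (a : UnitAddCircle) s) (𝓝[>] (1 : ℝ))
      (𝓝 (((∑' n, F 1 n) / 2 : ℝ) : ℂ)) := by
    have := (Complex.continuous_ofReal.tendsto _).comp (hlim.div_const 2)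
    refine this.congr' ?_
    filter_upwards [self_mem_nhdsWithin] with s hs
    exact (hval s hs).symm
  rw [tendsto_nhds_unique hcont hlim2]
  -- cot series
  have hF1 : Summable (F 1) := by
    apply Summable.of_norm_bounded hsum
    intro n
    exact rpow_diff_bound' n ha ha1 le_rfl (by norm_num)
  have hz : (a : ℂ) ∈ Complex.integerComplement := by
    rw [Complex.mem_integerComplement_iff]
    rintro ⟨n, hn⟩
    have hn' : (n : ℝ) = a := by exact_mod_cast hn
    rw [← hn'] at ha ha1
    have h1 : 0 < n := by exact_mod_cast ha
    have h2 : n < 1 := by exact_mod_cast ha1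
    omega
  have t1 := tendsto_logDeriv_euler_cot_sub hz
  have t2 := (Complex.continuous_ofReal.tendsto _).comp hF1.hasSum.tendsto_sum_nat
  have t3 : Tendsto (fun N : ℕ => (1 / (a : ℂ) - ((((N : ℝ) + a)⁻¹ : ℝ) : ℂ))) atTop (𝓝 (1 / (a : ℂ) - ((0 : ℝ) : ℂ))) := by
    apply Tendsto.sub tendsto_const_nhds
    apply (Complex.continuous_ofReal.tendsto _).comp
    apply Tendsto.inv_tendsto_atTop
    exact tendsto_atTop_add_const_right _ _ tendsto_natCast_atTop_atTop
  have t4 := t1.add t3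
  have key : ∀ N : ℕ, ∑ j ∈ Finset.range N, cotTerm (a : ℂ) j + (1 / (a : ℂ) - ((((N : ℝ) + a)⁻¹ : ℝ) : ℂ))
      = ((∑ n ∈ Finset.range N, F 1 n : ℝ) : ℂ) := by
    intro N
    induction N with
    | zero => simp
    | succ N ih =>
      rw [Finset.sum_range_succ, Finset.sum_range_succ, Complex.ofReal_add, ← ih]
      simp only [F, cotTerm, Real.rpow_neg_one]
      push_cast
      have e : ((a : ℂ) - (N + 1)) = -((N : ℂ) + 1 - a) := by ring
      rw [e, one_div_neg_eq_neg_one_div]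
      ring
  have t5 := t4.congr key
  have := tendsto_nhds_unique t5 t2
  have h6 : ((∑' n, F 1 n : ℝ) : ℂ) = ((Real.pi * Real.cot (Real.pi * a) : ℝ) : ℂ) := by
    rw [← this]; push_cast; ring
  rw [Complex.ofReal_inj] at h6 ⊢
  rw [h6]; ring

/-- The quadratic character with complex values. -/
noncomputable abbrev qc (p : ℕ) [Fact p.Prime] : DirichletCharacter ℂ p :=
  (quadraticChar (ZMod p)).ringHomComp (Int.castRingHom ℂ)

theorem qc_apply (p : ℕ) [Fact p.Prime] (a : ZMod p) : qc p a = ((quadraticChar (ZMod p) a : ℤ) : ℂ) := rfl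

theorem qc_ne_one (p : ℕ) [Fact p.Prime] (hp : p ≠ 2) : qc p ≠ 1 := by
  intro h
  have h2 : ringChar (ZMod p) ≠ 2 := by rwa [ZMod.ringChar_zmod_n]
  obtain ⟨a, ha⟩ := quadraticChar_exists_neg_one h2
  have h3 : qc p a = -1 := by rw [qc_apply, ha]; simp
  have hu : IsUnit a := by
    by_contra hc
    rw [MulChar.map_nonunit _ hc] at ha
    norm_num at ha
  rw [h, MulChar.one_apply hu] at h3
  norm_num at h3

theorem L_re_pos_of_one_lt (p : ℕ) [Fact p.Prime] (s : ℝ) (hs : 1 < s) :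
    ∃ r : ℝ, 0 < r ∧ DirichletCharacter.LFunction (qc p) s = r := by
  have hs' : 1 < (s : ℂ).re := by simpa using hs
  rw [DirichletCharacter.LFunction_eq_LSeries _ hs',
    ← DirichletCharacter.LSeries_eulerProduct_exp_log _ hs']
  refine ⟨Real.exp (∑' q : Nat.Primes, -Real.log (1 - (quadraticChar (ZMod p) (q : ZMod p) : ℝ) * (q : ℝ) ^ (-s))),
    Real.exp_pos _, ?_⟩
  rw [Complex.ofReal_exp, Complex.ofReal_tsum]
  congr 2
  ext q
  have hq : (1 : ℝ) < (q : ℕ) := by exact_mod_cast q.2.one_lt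
  have h1 : ((q : ℕ) : ℝ) ^ (-s) < 1 := Real.rpow_lt_one_of_one_lt_of_neg hq (by linarith)
  have h0 : 0 < ((q : ℕ) : ℝ) ^ (-s) := by positivity
  have hb : ((quadraticChar (ZMod p) (q : ZMod p) : ℤ) : ℝ) ≤ 1 := by
    rcases quadraticChar_isQuadratic (ZMod p) (q : ZMod p) with h | h | h <;> rw [h] <;> norm_num
  rw [Complex.ofReal_neg, Complex.ofReal_log (by nlinarith)]
  push_cast
  rw [Complex.ofReal_cpow (by positivity)]
  push_cast
  rw [qc_apply]

theorem L_one_pos (p : ℕ) [Fact p.Prime] (hp : p ≠ 2) : 0 < (DirichletCharacter.LFunction (qc p) 1).re ∧ (DirichletCharacter.LFunction (qc p) 1).im = 0 := by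
  have hne := DirichletCharacter.LFunction_apply_one_ne_zero (qc_ne_one p hp)
  have hc : Tendsto (fun s : ℝ => DirichletCharacter.LFunction (qc p) s) (𝓝[>] 1) (𝓝 (DirichletCharacter.LFunction (qc p) 1)) := by
    apply Tendsto.mono_left _ nhdsWithin_le_nhds
    have := ((DirichletCharacter.differentiable_LFunction (qc_ne_one p hp)).continuous.comp
      Complex.continuous_ofReal).tendsto 1
    simpa [Function.comp_def] using this
  have hre := (Complex.continuous_re.tendsto _).comp hc
  have him := (Complex.continuous_im.tendsto _).comp hc
  have h1 : 0 ≤ (DirichletCharacter.LFunction (qc p) 1).re := by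
    apply ge_of_tendsto hre
    filter_upwards [self_mem_nhdsWithin] with s hs
    obtain ⟨r, hr, h⟩ := L_re_pos_of_one_lt p s hs
    simp [h, hr.le]
  have h2 : (DirichletCharacter.LFunction (qc p) 1).im = 0 := by
    apply tendsto_nhds_unique him
    apply tendsto_const_nhds.congr'
    filter_upwards [self_mem_nhdsWithin] with s hs
    obtain ⟨r, hr, h⟩ := L_re_pos_of_one_lt p s hs
    simp [h]
  refine ⟨lt_of_le_of_ne h1 fun h => hne ?_, h2⟩
  apply Complex.ext
  · simp [← h]
  · simp [h2]
open Polynomial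

theorem prod_range_two_mul_pair {M : Type*} [CommMonoid M] (f : ℕ → M) (m : ℕ) :
    ∏ j ∈ Finset.range (2 * m), f (j + 1) =
      ∏ k ∈ Finset.range m, (f (k + 1) * f (2 * m + 1 - (k + 1))) := by
  rw [two_mul, Finset.prod_range_add, Finset.prod_mul_distrib]
  congr 1
  rw [← Finset.prod_range_reflect]
  apply Finset.prod_congr rfl
  intro k hk
  rw [Finset.mem_range] at hk
  congr 1
  omega

theorem sum_pow_card_sub_one (p : ℕ) [Fact p.Prime] : ∑ a : ZMod p, a ^ (p - 1) = -1 := by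
  have hp := (Fact.out : p.Prime).two_le
  have : ∀ a : ZMod p, a ^ (p - 1) = 1 - if a = 0 then 1 else 0 := by
    intro a
    split_ifs with h
    · rw [h, zero_pow (by omega)]; simp
    · rw [ZMod.pow_card_sub_one_eq_one h]; simp
  simp_rw [this]
  rw [Finset.sum_sub_distrib]
  simp

theorem sum_char_choose (p m : ℕ) [Fact p.Prime] (hm : p = 2 * m + 1) (hm0 : 0 < m) :
    (m.factorial : ZMod p) *
      ∑ a : ZMod p, ((quadraticChar (ZMod p) a : ℤ) : ZMod p) * (Nat.choose a.val m : ZMod p) = -1 := by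
  have h2 : ringChar (ZMod p) ≠ 2 := by rw [ZMod.ringChar_zmod_n]; omega
  have hterm : ∀ a : ZMod p, (m.factorial : ZMod p) * (((quadraticChar (ZMod p) a : ℤ) : ZMod p) * (Nat.choose a.val m : ZMod p))
      = (X ^ m * descPochhammer (ZMod p) m).eval a := by
    intro a
    rw [quadraticChar_eq_pow_of_char_ne_two' h2, ZMod.card, show p / 2 = m by omega, eval_mul, eval_pow, eval_X]
    have : (descPochhammer (ZMod p) m).eval a = (m.factorial : ZMod p) * (Nat.choose a.val m : ZMod p) := by
      conv_lhs => rw [← ZMod.natCast_zmod_val a]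
      rw [descPochhammer_eval_eq_descFactorial, Nat.descFactorial_eq_factorial_mul_choose]
      push_cast; rfl
    rw [this]; ring
  rw [Finset.mul_sum]
  simp_rw [hterm]
  have hmon : (X ^ m * descPochhammer (ZMod p) m).Monic := (monic_X_pow m).mul (monic_descPochhammer _ m)
  have hdeg : (X ^ m * descPochhammer (ZMod p) m).natDegree = 2 * m := by
    rw [(monic_X_pow m).natDegree_mul (monic_descPochhammer _ m), natDegree_X_pow, descPochhammer_natDegree]; ring
  simp_rw [eval_eq_sum_range, hdeg]
  rw [Finset.sum_comm]
  simp_rw [← Finset.mul_sum]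
  rw [Finset.sum_range_succ, Finset.sum_eq_zero, zero_add]
  · have hc : (X ^ m * descPochhammer (ZMod p) m).coeff (2 * m) = 1 := by
      rw [← hdeg]; exact hmon
    rw [hc, one_mul, show 2 * m = p - 1 by omega, sum_pow_card_sub_one]
  · intro i hi
    rw [Finset.mem_range] at hi
    rw [FiniteField.sum_pow_lt_card_sub_one _ _ (by rw [ZMod.card]; omega), mul_zero]

theorem factorial_sq (p m : ℕ) [Fact p.Prime] (hm : p = 2 * m + 1) (hodd : Odd m) :
    (m.factorial : ZMod p) ^ 2 = 1 := by
  have h := ZMod.wilsons_lemma p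
  rw [show p - 1 = 2 * m by omega, ← Finset.prod_range_add_one_eq_factorial, Nat.cast_prod,
    prod_range_two_mul_pair (fun j => ((j : ℕ) : ZMod p))] at h
  have h2 : ∀ k ∈ Finset.range m, (((k + 1 : ℕ) : ZMod p) * ((2 * m + 1 - (k + 1) : ℕ) : ZMod p)) =
      (-1) * ((k + 1 : ℕ) : ZMod p) ^ 2 := by
    intro k hk
    rw [Finset.mem_range] at hk
    rw [Nat.cast_sub (by omega), ← hm, CharP.cast_eq_zero (ZMod p) p]
    ring
  rw [Finset.prod_congr rfl h2, Finset.prod_mul_distrib, Finset.prod_const, Finset.card_range,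
    hodd.neg_one_pow, Finset.prod_pow, ← Nat.cast_prod, Finset.prod_range_add_one_eq_factorial] at h
  linear_combination -h

theorem coeff_prod (p m : ℕ) [Fact p.Prime] (hm : p = 2 * m + 1) :
    (∏ k ∈ Finset.range m, ((X + 1 : (ZMod p)[X]) ^ (k + 1) - (X + 1) ^ (p - (k + 1)))).coeff m =
      2 ^ m * (m.factorial : ZMod p) := by
  have hd : ∀ k, ∃ q : (ZMod p)[X], k < m → ((X + 1 : (ZMod p)[X]) ^ (k + 1) - (X + 1) ^ (p - (k + 1)) = X * q ∧
      q.coeff 0 = 2 * ((k + 1 : ℕ) : ZMod p)) := by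
    intro k
    by_cases hk : k < m
    · have : X ∣ ((X + 1 : (ZMod p)[X]) ^ (k + 1) - (X + 1) ^ (p - (k + 1))) := by
        rw [X_dvd_iff, coeff_zero_eq_eval_zero]; simp
      obtain ⟨q, hq⟩ := this
      refine ⟨q, fun _ => ⟨hq, ?_⟩⟩
      have h1 := congrArg (fun f => coeff f 1) hq
      simp only [coeff_sub, coeff_X_add_one_pow, Nat.choose_one_right] at h1
      rw [coeff_X_mul] at h1
      rw [← h1, Nat.cast_sub (by omega), CharP.cast_eq_zero (ZMod p) p]
      ring
    · exact ⟨0, fun h => absurd h hk⟩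
  choose q hq using hd
  rw [Finset.prod_congr rfl (fun k hk => (hq k (Finset.mem_range.mp hk)).1), Finset.prod_mul_distrib,
    Finset.prod_const, Finset.card_range]
  have := coeff_X_pow_mul (∏ k ∈ Finset.range m, q k) m 0
  rw [zero_add] at this
  rw [this, coeff_zero_prod, Finset.prod_congr rfl (fun k hk => (hq k (Finset.mem_range.mp hk)).2),
    Finset.prod_mul_distrib, Finset.prod_const, Finset.card_range, ← Nat.cast_prod, Finset.prod_range_add_one_eq_factorial]

/-- Gauss sum polynomial -/
noncomputable def gaussPoly (p : ℕ) [Fact p.Prime] : ℤ[X] :=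
  ∑ a : ZMod p, C (quadraticChar (ZMod p) a) * X ^ a.val

/-- product polynomial -/
noncomputable def prodPoly (p m : ℕ) : ℤ[X] :=
  ∏ k ∈ Finset.range m, (X ^ (k + 1) - X ^ (p - (k + 1)))

theorem not_root (p m : ℕ) [Fact p.Prime] (hm : p = 2 * m + 1) (hmod : p % 8 = 3) (z : ℂ)
    (hz : IsPrimitiveRoot z p) : aeval z (gaussPoly p + prodPoly p m) ≠ 0 := by
  intro h0
  have hpp := (Fact.out : p.Prime)
  have hdvd : cyclotomic p ℤ ∣ gaussPoly p + prodPoly p m := by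
    rw [cyclotomic_eq_minpoly hz hpp.pos]
    exact minpoly.isIntegrallyClosed_dvd (hz.isIntegral hpp.pos) h0
  have h1 := map_dvd (mapRingHom (Int.castRingHom (ZMod p))) hdvd
  have h2 := map_dvd (compRingHom (X + 1 : (ZMod p)[X])) h1
  have hcyc : compRingHom (X + 1 : (ZMod p)[X]) (mapRingHom (Int.castRingHom (ZMod p)) (cyclotomic p ℤ)) = X ^ (p - 1) := by
    have := cyclotomic_mul_prime_eq_pow_of_not_dvd (ZMod p) (p := p) (n := 1) (by
      rw [Nat.dvd_one]; exact hpp.one_lt.ne')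
    rw [one_mul] at this
    simp [this]
  rw [hcyc, X_pow_dvd_iff] at h2
  have h3 := h2 m (by omega)
  rw [map_add, map_add, coeff_add] at h3
  have e1 : (compRingHom (X + 1 : (ZMod p)[X]) (mapRingHom (Int.castRingHom (ZMod p)) (gaussPoly p))).coeff m
      = ∑ a : ZMod p, ((quadraticChar (ZMod p) a : ℤ) : ZMod p) * (Nat.choose a.val m : ZMod p) := by
    simp only [gaussPoly, map_sum, map_mul, map_pow, finsetSum_coeff]
    apply Finset.sum_congr rfl
    intro a _
    have : (compRingHom (X + 1 : (ZMod p)[X]) (mapRingHom (Int.castRingHom (ZMod p)) (C (quadraticChar (ZMod p) a)))) =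
      C (((quadraticChar (ZMod p) a : ℤ) : ZMod p)) := by simp
    rw [this, coeff_C_mul]
    simp [coeff_X_add_one_pow]
  have e2 : (compRingHom (X + 1 : (ZMod p)[X]) (mapRingHom (Int.castRingHom (ZMod p)) (prodPoly p m))).coeff m
      = 2 ^ m * (m.factorial : ZMod p) := by
    rw [← coeff_prod p m hm]
    simp [prodPoly]
  rw [e1, e2] at h3
  have h4 := sum_char_choose p m hm (by omega)
  have h5 := factorial_sq p m hm (by rw [Nat.odd_iff]; omega)
  have hr : ringChar (ZMod p) ≠ 2 := by rw [ZMod.ringChar_zmod_n]; omega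
  have h6 : (2 : ZMod p) ^ m = -1 := by
    have := quadraticChar_eq_pow_of_char_ne_two' hr (2 : ZMod p)
    rw [ZMod.card, show p / 2 = m by omega] at this
    rw [← this, quadraticChar_neg_one_iff_not_isSquare.mpr]
    · simp
    · rw [ZMod.exists_sq_eq_two_iff (by omega)]; omega
  have h7 : (2 : ZMod p) = 0 := by
    have := congrArg (fun x => (m.factorial : ZMod p) * x) h3
    simp only [mul_add, mul_zero, h4, h6] at this
    linear_combination -this - h5
  have : p ∣ 2 := by
    rw [← ZMod.natCast_eq_zero_iff]; exact_mod_cast h7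
  have := Nat.le_of_dvd (by norm_num) this
  omega

theorem prod_one_sub_root (p : ℕ) [Fact p.Prime] (w : ℂ) (hw : IsPrimitiveRoot w p) :
    ∏ j ∈ Finset.range (p - 1), (1 - w ^ (j + 1)) = p := by
  have hpp := (Fact.out : p.Prime)
  have h := congrArg (Polynomial.eval 1) (Polynomial.cyclotomic_eq_prod_X_sub_primitiveRoots hw)
  rw [Polynomial.eval_one_cyclotomic_prime, Polynomial.eval_prod] at h
  rw [h]
  refine Finset.prod_bij (fun j _ => w ^ (j + 1)) ?_ ?_ ?_ ?_
  · intro j hj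
    rw [Finset.mem_range] at hj
    rw [mem_primitiveRoots hpp.pos]
    exact hw.pow_of_coprime _ ((Nat.coprime_of_lt_prime (by omega) (by omega) hpp)).symm
  · intro i hi j hj hij
    rw [Finset.mem_range] at hi hj
    have := hw.pow_inj (by omega) (by omega) hij
    omega
  · intro b hb
    rw [mem_primitiveRoots hpp.pos] at hb
    obtain ⟨i, hi, hc, rfl⟩ := hw.isPrimitiveRoot_iff.mp hb
    have : i ≠ 0 := by
      rintro rfl
      rw [Nat.coprime_zero_left] at hc
      exact hpp.one_lt.ne' hc
    exact ⟨i - 1, by rw [Finset.mem_range]; omega, by rw [Nat.sub_add_cancel (by omega)]⟩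
  · intro j hj
    simp

theorem aeval_prodPoly_sq (p m : ℕ) [Fact p.Prime] (hm : p = 2 * m + 1) (hodd : Odd m) (z : ℂ)
    (hz : IsPrimitiveRoot z p) : (aeval z (prodPoly p m)) ^ 2 = -(p : ℂ) := by
  have hw : IsPrimitiveRoot (z ^ 2) p := hz.pow_of_coprime _ (by
    rw [hm]; simp)
  have h := prod_one_sub_root p _ hw
  rw [show p - 1 = 2 * m by omega, prod_range_two_mul_pair (fun j => (1 - (z ^ 2) ^ j))] at h
  have h2 : ∀ k ∈ Finset.range m, (1 - (z ^ 2) ^ (k + 1)) * (1 - (z ^ 2) ^ (2 * m + 1 - (k + 1))) =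
      (-1) * (z ^ (k + 1) - z ^ (p - (k + 1))) ^ 2 := by
    intro k hk
    rw [Finset.mem_range] at hk
    rw [← hm]
    have h3 : z ^ (k + 1) * z ^ (p - (k + 1)) = 1 := by
      rw [← pow_add, Nat.add_sub_cancel' (by omega), hz.pow_eq_one]
    rw [← pow_mul, ← pow_mul, mul_comm 2, mul_comm 2, pow_mul, pow_mul]
    linear_combination (z ^ (k + 1) * z ^ (p - (k + 1)) + 1 - 2) * h3
  rw [Finset.prod_congr rfl h2, Finset.prod_mul_distrib, Finset.prod_const, Finset.card_range,
    hodd.neg_one_pow, Finset.prod_pow] at h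
  rw [← h]
  simp [prodPoly]

theorem aeval_prodPoly_pos (p m : ℕ) [Fact p.Prime] (hm : p = 2 * m + 1) (hm4 : m % 4 = 1) :
    ∃ r : ℝ, 0 < r ∧ aeval (Complex.exp (2 * Real.pi * Complex.I / p)) (prodPoly p m) = Complex.I * r := by
  refine ⟨∏ k ∈ Finset.range m, (2 * Real.sin (2 * Real.pi * (k + 1) / p)), ?_, ?_⟩
  · apply Finset.prod_pos
    intro k hk
    rw [Finset.mem_range] at hk
    have hp : (0 : ℝ) < p := by rw [hm]; positivity
    have : 2 * ((k : ℝ) + 1) < p := by rw [hm]; exact_mod_cast (by omega : 2 * (k + 1) < 2 * m + 1)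
    apply mul_pos two_pos
    apply Real.sin_pos_of_pos_of_lt_pi
    · positivity
    · rw [div_lt_iff₀ hp]
      nlinarith [Real.pi_pos]
  · have hI : Complex.I = Complex.I ^ m := by
      rw [← Nat.div_add_mod m 4, hm4, pow_add, pow_mul, Complex.I_pow_four]; simp
    have hI2 : Complex.I ^ m = ∏ k ∈ Finset.range m, Complex.I := by simp
    set z := Complex.exp (2 * Real.pi * Complex.I / p) with hz
    have hp0 : (p : ℂ) ≠ 0 := by exact_mod_cast (NeZero.ne p)
    have hzp : z ^ p = 1 := by
      rw [hz, ← Complex.exp_nat_mul, mul_div_cancel₀ _ hp0, Complex.exp_two_pi_mul_I]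
    conv_rhs => rw [hI, hI2]
    rw [Complex.ofReal_prod, ← Finset.prod_mul_distrib]
    simp only [prodPoly, map_prod, map_sub, map_pow, aeval_X]
    apply Finset.prod_congr rfl
    intro k hk
    rw [Finset.mem_range] at hk
    have e1 : z ^ (k + 1) = Complex.exp ((2 * Real.pi * (k + 1) / p) * Complex.I) := by
      rw [hz, ← Complex.exp_nat_mul]; push_cast; congr 1; ring
    have e2 : z ^ (p - (k + 1)) = Complex.exp (-(2 * Real.pi * (k + 1) / p) * Complex.I) := by
      have : z ^ (p - (k + 1)) * z ^ (k + 1) = 1 := by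
        rw [← pow_add, Nat.sub_add_cancel (by omega), hzp]
      rw [eq_inv_of_mul_eq_one_left this, e1, ← Complex.exp_neg]; congr 1; ring
    rw [e1, e2]
    push_cast
    rw [Complex.sin]
    linear_combination (Complex.exp ((2 * Real.pi * (k + 1) / p) * Complex.I) - Complex.exp (-(2 * Real.pi * (k + 1) / p) * Complex.I)) * Complex.I_mul_I

theorem aeval_gaussPoly (p : ℕ) [Fact p.Prime] :
    aeval (Complex.exp (2 * Real.pi * Complex.I / p)) (gaussPoly p) = gaussSum (qc p) (ZMod.stdAddChar) := by
  simp only [gaussPoly, gaussSum, map_sum, map_mul, map_pow, aeval_X, aeval_C]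
  apply Finset.sum_congr rfl
  intro a _
  congr 1
  have := ZMod.stdAddChar_coe (N := p) (a.val : ℤ)
  rw [Int.cast_natCast, ZMod.natCast_zmod_val] at this
  rw [this, ← Complex.exp_nat_mul]
  push_cast; congr 1; ring

theorem quadraticChar_neg_one_eq (p : ℕ) [Fact p.Prime] (hmod : p % 8 = 3) :
    quadraticChar (ZMod p) (-1) = -1 := by
  rw [quadraticChar_neg_one_iff_not_isSquare, ZMod.exists_sq_eq_neg_one_iff]
  omega

theorem gaussSum_eq (p : ℕ) [Fact p.Prime] (hmod : p % 8 = 3) :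
    ∃ r : ℝ, 0 < r ∧ gaussSum (qc p) (ZMod.stdAddChar) = Complex.I * r := by
  obtain ⟨m, hm⟩ : ∃ m, p = 2 * m + 1 := ⟨p / 2, by omega⟩
  obtain ⟨r, hr, h⟩ := aeval_prodPoly_pos p m hm (by omega)
  refine ⟨r, hr, ?_⟩
  have hz := Complex.isPrimitiveRoot_exp p (NeZero.ne p)
  have h1 := aeval_prodPoly_sq p m hm (by rw [Nat.odd_iff]; omega) _ hz
  have h2 := not_root p m hm hmod _ hz
  rw [map_add, aeval_gaussPoly] at h2
  have h3 := gaussSum_sq (qc_ne_one p (by omega)) ((quadraticChar_isQuadratic (ZMod p)).comp _)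
    (ZMod.isPrimitive_stdAddChar p)
  rw [qc_apply, quadraticChar_neg_one_eq p hmod, ZMod.card] at h3
  have h4 : gaussSum (qc p) (ZMod.stdAddChar) ^ 2 = (aeval (Complex.exp (2 * Real.pi * Complex.I / p)) (prodPoly p m)) ^ 2 := by
    rw [h3, h1]; simp
  rcases sq_eq_sq_iff_eq_or_eq_neg.mp h4 with h5 | h5
  · rw [h5, h]
  · exact absurd (by rw [h5]; ring) h2

theorem stdAddChar_mul_val (p : ℕ) [Fact p.Prime] (a : ZMod p) (b : ℕ) :
    ZMod.stdAddChar (a * (b : ZMod p)) = Complex.exp (((2 * Real.pi * a.val * b / p : ℝ) : ℂ) * Complex.I) := by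
  have := ZMod.stdAddChar_coe (N := p) ((a.val * b : ℕ) : ℤ)
  rw [Int.cast_natCast, Nat.cast_mul, ZMod.natCast_zmod_val] at this
  rw [this]
  push_cast; congr 1; ring

theorem sum_cos (p : ℕ) [Fact p.Prime] (b : ℕ) :
    ∑ a : ZMod p, Real.cos (2 * Real.pi * a.val * b / p) = if (b : ZMod p) = 0 then (p : ℝ) else 0 := by
  have h := AddChar.sum_mulShift (b : ZMod p) (ZMod.isPrimitive_stdAddChar p)
  simp_rw [stdAddChar_mul_val] at h
  have h' := congrArg Complex.re h
  rw [Complex.re_sum] at h'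
  simp_rw [Complex.exp_ofReal_mul_I_re] at h'
  rw [h', ZMod.card]
  split_ifs <;> simp

theorem sin_val_ne_zero (p : ℕ) [Fact p.Prime] (a : ZMod p) (ha : a ≠ 0) :
    Real.sin (Real.pi * (a.val / p)) ≠ 0 := by
  have h1 : 0 < (a.val : ℝ) := by
    have : a.val ≠ 0 := by rwa [ne_eq, ZMod.val_eq_zero]
    exact_mod_cast Nat.pos_of_ne_zero this
  have h2 : (a.val : ℝ) < p := by exact_mod_cast ZMod.val_lt a
  have hp : (0 : ℝ) < p := h1.trans h2
  apply ne_of_gt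
  apply Real.sin_pos_of_pos_of_lt_pi
  · have := Real.pi_pos
    positivity
  · have : (a.val : ℝ) / p < 1 := (div_lt_one hp).mpr h2
    nlinarith [Real.pi_pos]

theorem cot_sin_step (p : ℕ) [Fact p.Prime] (b : ℕ) :
    ∑ a : ZMod p, Real.cot (Real.pi * (a.val / p)) * Real.sin (2 * Real.pi * a.val * (b + 1 : ℕ) / p) =
    ∑ a : ZMod p, Real.cot (Real.pi * (a.val / p)) * Real.sin (2 * Real.pi * a.val * b / p) +
    ∑ a : ZMod p, Real.cos (2 * Real.pi * a.val * b / p) +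
    ∑ a : ZMod p, Real.cos (2 * Real.pi * a.val * (b + 1 : ℕ) / p) - 2 := by
  have h2 : (2 : ℝ) = ∑ a : ZMod p, if a = 0 then 2 else 0 := by simp
  rw [h2, ← Finset.sum_add_distrib, ← Finset.sum_add_distrib, ← Finset.sum_sub_distrib]
  apply Finset.sum_congr rfl
  intro a _
  rw [← h2]
  split_ifs with ha
  · subst ha; simp; norm_num
  · have hs := sin_val_ne_zero p a ha
    set x := Real.pi * (a.val / p) with hx
    have e1 : 2 * Real.pi * a.val * b / p = (2 * b + 1) * x - x := by rw [hx]; ring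
    have e2 : 2 * Real.pi * a.val * (b + 1 : ℕ) / p = (2 * b + 1) * x + x := by rw [hx]; push_cast; ring
    rw [e1, e2, Real.sin_add, Real.sin_sub, Real.cos_add, Real.cos_sub, Real.cot_eq_cos_div_sin]
    field_simp
    ring

theorem cot_sin_sum (p : ℕ) [Fact p.Prime] (b : ℕ) (hb : b + 1 < p) :
    ∑ a : ZMod p, Real.cot (Real.pi * (a.val / p)) * Real.sin (2 * Real.pi * a.val * (b + 1 : ℕ) / p) =
      (p : ℝ) - 2 * (b + 1) := by
  have hne : ∀ c : ℕ, c + 1 < p → ¬ ((c + 1 : ℕ) : ZMod p) = 0 := by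
    intro c hc h
    rw [ZMod.natCast_eq_zero_iff] at h
    have := Nat.le_of_dvd (by omega) h
    omega
  induction b with
  | zero =>
    rw [cot_sin_step, sum_cos, sum_cos, if_neg (hne 0 hb)]
    simp
  | succ b ih =>
    rw [cot_sin_step, sum_cos, sum_cos, if_neg (hne _ hb), if_neg (hne b (by omega)), ih (by omega)]
    push_cast; ring

theorem gauss_sin (p : ℕ) [Fact p.Prime] (r : ℝ) (hg : gaussSum (qc p) (ZMod.stdAddChar) = Complex.I * r) (a : ZMod p) :
    r * (quadraticChar (ZMod p) a : ℝ) = ∑ b : ZMod p, (quadraticChar (ZMod p) b : ℝ) * Real.sin (2 * Real.pi * a.val * b.val / p) := by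
  by_cases ha : a = 0
  · subst ha; simp
  have h := gaussSum_mulShift (qc p) (ZMod.stdAddChar) (Units.mk0 a ha)
  rw [hg, Units.val_mk0] at h
  have hsq : qc p a * qc p a = 1 := by
    rw [qc_apply]
    exact_mod_cast (by rw [← sq]; exact quadraticChar_sq_one ha : quadraticChar (ZMod p) a * quadraticChar (ZMod p) a = 1)
  have h1 : gaussSum (qc p) ((ZMod.stdAddChar (N := p)).mulShift a) = Complex.I * r * qc p a := by
    rw [← h]; linear_combination (-gaussSum (qc p) ((ZMod.stdAddChar (N := p)).mulShift a)) * hsq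
  have h2 := congrArg Complex.im h1
  simp only [gaussSum, AddChar.mulShift_apply, qc_apply] at h2
  rw [Complex.im_sum] at h2
  have h3 : (Complex.I * r * ((quadraticChar (ZMod p) a : ℤ) : ℂ)).im = r * (quadraticChar (ZMod p) a : ℝ) := by
    simp
  rw [h3] at h2
  rw [← h2]
  apply Finset.sum_congr rfl
  intro b _
  have h4 := stdAddChar_mul_val p a b.val
  rw [ZMod.natCast_zmod_val] at h4
  rw [h4, ← Complex.exp_ofReal_mul_I_im, ← Complex.ofReal_intCast, Complex.im_ofReal_mul]

theorem cot_sum_pos (p : ℕ) [Fact p.Prime] (hmod : p % 8 = 3) :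
    0 < ∑ a : ZMod p, (quadraticChar (ZMod p) a : ℝ) * Real.cot (Real.pi * (a.val / p)) := by
  have h := (L_one_pos p (by omega)).1
  have hodd : Function.Odd (fun a : ZMod p => qc p a) := by
    intro a
    show qc p (-a) = -qc p a
    rw [← neg_one_mul, map_mul, qc_apply p (-1), quadraticChar_neg_one_eq p hmod]; simp
  have hp : (0 : ℝ) < p := by exact_mod_cast (NeZero.pos p)
  have hL : DirichletCharacter.LFunction (qc p) 1 =
      (((p : ℝ)⁻¹ * (Real.pi / 2) * ∑ a : ZMod p, (quadraticChar (ZMod p) a : ℝ) * Real.cot (Real.pi * (a.val / p)) : ℝ) : ℂ) := by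
    unfold DirichletCharacter.LFunction
    rw [ZMod.LFunction_def_odd hodd, Complex.cpow_neg_one]
    rw [mul_assoc, Complex.ofReal_mul, Complex.ofReal_inv, Complex.ofReal_natCast]
    congr 1
    rw [Finset.mul_sum, Complex.ofReal_sum]
    apply Finset.sum_congr rfl
    intro a _
    by_cases ha : a = 0
    · subst ha; simp
    rw [ZMod.toAddCircle_apply, hurwitzOdd_one_eq_cot, qc_apply]
    · push_cast; ring
    · have : 0 < (a.val : ℝ) := by
        have : a.val ≠ 0 := by rwa [ne_eq, ZMod.val_eq_zero]
        exact_mod_cast Nat.pos_of_ne_zero this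
      positivity
    · rw [div_lt_one hp]; exact_mod_cast ZMod.val_lt a
  rw [hL, Complex.ofReal_re] at h
  exact pos_of_mul_pos_right h (by have := Real.pi_pos; positivity)

theorem weighted_sum_pos (p : ℕ) [Fact p.Prime] (hmod : p % 8 = 3) :
    0 < ∑ b : ZMod p, quadraticChar (ZMod p) b * ((p : ℤ) - 2 * b.val) := by
  obtain ⟨r, hr, hg⟩ := gaussSum_eq p hmod
  have h := mul_pos hr (cot_sum_pos p hmod)
  rw [Finset.mul_sum] at h
  simp_rw [← mul_assoc, gauss_sin p r hg, Finset.sum_mul] at h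
  rw [Finset.sum_comm] at h
  have h2 : ∀ b : ZMod p, ∑ a : ZMod p, (quadraticChar (ZMod p) b : ℝ) * Real.sin (2 * Real.pi * a.val * b.val / p) *
      Real.cot (Real.pi * (a.val / p)) = ((quadraticChar (ZMod p) b * ((p : ℤ) - 2 * b.val) : ℤ) : ℝ) := by
    intro b
    by_cases hb : b = 0
    · subst hb; simp
    have hb0 : b.val ≠ 0 := by rwa [ne_eq, ZMod.val_eq_zero]
    obtain ⟨n, hn⟩ := Nat.exists_eq_succ_of_ne_zero hb0
    have hlt := ZMod.val_lt b
    have := cot_sin_sum p n (by omega)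
    rw [hn]
    push_cast
    rw [Nat.succ_eq_add_one] at *
    push_cast at this ⊢
    rw [← this, Finset.mul_sum]
    apply Finset.sum_congr rfl
    intro a _
    ring
  simp_rw [h2] at h
  exact_mod_cast h

theorem half_sum_pos (p m : ℕ) [Fact p.Prime] (hm : p = 2 * m + 1) (hmod : p % 8 = 3) :
    0 < ∑ k ∈ Finset.range m, quadraticChar (ZMod p) ((k + 1 : ℕ) : ZMod p) * ((k + 1 : ℕ) : ℤ) := by
  have h := weighted_sum_pos p hmod
  let f : ℕ → ℤ := fun n => quadraticChar (ZMod p) (n : ZMod p) * ((p : ℤ) - 2 * n)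
  have e0 : ∑ b : ZMod p, quadraticChar (ZMod p) b * ((p : ℤ) - 2 * b.val) = ∑ n ∈ Finset.range p, f n := by
    refine Finset.sum_bij (fun b _ => b.val) ?_ ?_ ?_ ?_
    · intro b _; exact Finset.mem_range.mpr (ZMod.val_lt b)
    · intro a _ b _ hab; exact ZMod.val_injective p hab
    · intro n hn; exact ⟨(n : ZMod p), Finset.mem_univ _, ZMod.val_cast_of_lt (Finset.mem_range.mp hn)⟩
    · intro b _; simp [f]
  have hsymm : ∀ n, n ≤ p → f (p - n) = f n := by
    intro n hn
    simp only [f]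
    rw [Nat.cast_sub hn, Nat.cast_sub hn, CharP.cast_eq_zero (ZMod p) p, zero_sub, ← neg_one_mul, map_mul,
      quadraticChar_neg_one_eq p hmod]
    ring
  have f0 : f 0 = 0 := by simp [f]
  have hr : ∀ n : ℕ, ∑ i ∈ Finset.range (n + 1), f i = f 0 + ∑ j ∈ Finset.range n, f (j + 1) := by
    intro n; rw [Finset.sum_range_succ']; ring
  have e1 : ∑ n ∈ Finset.range p, f n = ∑ j ∈ Finset.range (2 * m), f (j + 1) := by
    conv_lhs => rw [hm]
    rw [hr, f0, zero_add]
  have hpair : ∀ (g : ℕ → ℤ) (n : ℕ), ∑ j ∈ Finset.range (2 * n), g j = ∑ k ∈ Finset.range n, g (2 * k) + ∑ k ∈ Finset.range n, g (2 * k + 1) := by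
    intro g n
    induction n with
    | zero => simp
    | succ n ih =>
      rw [show 2 * (n + 1) = 2 * n + 1 + 1 by ring, Finset.sum_range_succ, Finset.sum_range_succ, ih,
        Finset.sum_range_succ, Finset.sum_range_succ]
      ring
  have e2 : ∑ j ∈ Finset.range (2 * m), f (j + 1) = 2 * ∑ k ∈ Finset.range m, f (k + 1) := by
    rw [two_mul m, Finset.sum_range_add, two_mul]
    congr 1
    rw [← Finset.sum_range_reflect]
    apply Finset.sum_congr rfl
    intro k hk
    rw [Finset.mem_range] at hk
    rw [← hsymm (k + 1) (by omega)]
    congr 1; omega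
  have e3 : ∑ j ∈ Finset.range (2 * m), f (j + 1) = 2 * ∑ k ∈ Finset.range m, f (2 * (k + 1)) := by
    rw [hpair (fun j => f (j + 1)), two_mul]
    congr 1
    rw [← Finset.sum_range_reflect]
    apply Finset.sum_congr rfl
    intro k hk
    rw [Finset.mem_range] at hk
    rw [← hsymm (2 * (k + 1)) (by omega)]
    congr 1; omega
  have hq2 : quadraticChar (ZMod p) 2 = -1 := by
    rw [quadraticChar_neg_one_iff_not_isSquare, ZMod.exists_sq_eq_two_iff (by omega)]; omega
  have e4 : ∑ k ∈ Finset.range m, f (k + 1) = (p : ℤ) * ∑ k ∈ Finset.range m, quadraticChar (ZMod p) ((k + 1 : ℕ) : ZMod p)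
      - 2 * ∑ k ∈ Finset.range m, quadraticChar (ZMod p) ((k + 1 : ℕ) : ZMod p) * ((k + 1 : ℕ) : ℤ) := by
    rw [Finset.mul_sum, Finset.mul_sum, ← Finset.sum_sub_distrib]
    apply Finset.sum_congr rfl
    intro k _
    simp only [f]; ring
  have e5 : ∑ k ∈ Finset.range m, f (2 * (k + 1)) = -(p : ℤ) * ∑ k ∈ Finset.range m, quadraticChar (ZMod p) ((k + 1 : ℕ) : ZMod p)
      + 4 * ∑ k ∈ Finset.range m, quadraticChar (ZMod p) ((k + 1 : ℕ) : ZMod p) * ((k + 1 : ℕ) : ℤ) := by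
    rw [Finset.mul_sum, Finset.mul_sum, ← Finset.sum_add_distrib]
    apply Finset.sum_congr rfl
    intro k _
    simp only [f]
    rw [Nat.cast_mul 2 (k + 1), Nat.cast_mul 2 (k + 1), Nat.cast_ofNat, map_mul, hq2]
    push_cast
    ring
  rw [e0, e1] at h
  linarith

open scoped Classical in
/-- For a prime `p ≡ 3 (mod 8)`, the sum of the quadratic residues of `p` in
`[1, (p-1)/2]` is strictly greater than the sum of the non-residues of `p` in
`[1, (p-1)/2]`. -/
theorem sum_small_residues_gt_sum_small_nonresidues_of_prime_mod_eight_eq_three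
    (p : ℕ) (hp : p.Prime) (hmod : p % 8 = 3) :
    ∑ y ∈ (Finset.Icc 1 ((p - 1) / 2)).filter
        (fun y => ¬ ∃ x : ℤ, x ^ 2 ≡ (y : ℤ) [ZMOD (p : ℤ)]), y <
      ∑ y ∈ (Finset.Icc 1 ((p - 1) / 2)).filter
        (fun y => ∃ x : ℤ, x ^ 2 ≡ (y : ℤ) [ZMOD (p : ℤ)]), y := by
  haveI : Fact p.Prime := ⟨hp⟩
  obtain ⟨m, hm⟩ : ∃ m, p = 2 * m + 1 := ⟨p / 2, by omega⟩
  have h := half_sum_pos p m hm hmod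
  have hiff : ∀ y : ℕ, (∃ x : ℤ, x ^ 2 ≡ (y : ℤ) [ZMOD (p : ℤ)]) ↔ IsSquare ((y : ℕ) : ZMod p) := by
    intro y
    constructor
    · rintro ⟨x, hx⟩
      rw [← ZMod.intCast_eq_intCast_iff] at hx
      push_cast at hx
      exact ⟨(x : ZMod p), by rw [← hx]; ring⟩
    · rintro ⟨x, hx⟩
      refine ⟨(x.val : ℤ), ?_⟩
      rw [← ZMod.intCast_eq_intCast_iff]
      push_cast
      rw [ZMod.natCast_zmod_val, hx]; ring
  rw [show (p - 1) / 2 = m by omega, Finset.sum_filter, Finset.sum_filter]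
  have himg : (do
      let a ← Finset.Icc 1 m
      pure (a : ℤ) : Finset ℤ) = (Finset.Icc 1 m).image (fun a : ℕ => (a : ℤ)) := by
    ext z
    simp [Finset.bind_def, Finset.mem_sup, Finset.pure_def, eq_comm]
  rw [himg, Finset.sum_image (fun a _ b _ hab => Nat.cast_injective hab),
    Finset.sum_image (fun a _ b _ hab => Nat.cast_injective hab)]
  rw [← sub_pos, ← Finset.sum_sub_distrib]
  have hS : ∑ k ∈ Finset.range m, quadraticChar (ZMod p) ((k + 1 : ℕ) : ZMod p) * ((k + 1 : ℕ) : ℤ) =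
      ∑ y ∈ Finset.Icc 1 m, quadraticChar (ZMod p) ((y : ℕ) : ZMod p) * ((y : ℕ) : ℤ) := by
    refine Finset.sum_bij (fun k _ => k + 1) ?_ ?_ ?_ ?_
    · intro k hk; rw [Finset.mem_range] at hk; rw [Finset.mem_Icc]; omega
    · intro a _ b _ hab; omega
    · intro y hy; rw [Finset.mem_Icc] at hy
      exact ⟨y - 1, by rw [Finset.mem_range]; omega, by omega⟩
    · intro k _; rfl
  rw [hS] at h
  refine lt_of_lt_of_eq h (Finset.sum_congr rfl ?_)
  intro y hy
  rw [Finset.mem_Icc] at hy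
  have hy0 : ((y : ℕ) : ZMod p) ≠ 0 := by
    rw [ne_eq, ZMod.natCast_eq_zero_iff]
    intro hd
    have := Nat.le_of_dvd (by omega) hd
    omega
  have hi := hiff y
  by_cases hsq : IsSquare ((y : ℕ) : ZMod p)
  · rw [if_neg (not_not.mpr (hi.mpr hsq)), if_pos (hi.mpr hsq), (quadraticChar_one_iff_isSquare hy0).mpr hsq]
    simp
  · rw [if_pos (fun hc => hsq (hi.mp hc)), if_neg (fun hc => hsq (hi.mp hc)),
      quadraticChar_neg_one_iff_not_isSquare.mpr hsq]
    simp
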